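/- arXiv:2403.12824 — 3 statements merged into one kernel-verified Lean document; each statement's English description precedes it below -/
import Mathlib

section
/- Let $C \geq 1$, $M > 0$ and $T > 0$ satisfy $2C^2 M T < 1$. Let $(a_n)_{n \geq 0}$ be a sequence of continuous functions $a_n : [0,T] \to [0,\infty)$ with $a_0 \equiv 0$, and suppose that for every $n \geq 0$ and every $t \in [0,T]$, $a_{n+1}(t) \leq C e^{C \int_0^t a_n(\tau)\,d\tau} M + C \int_0^t e^{C \int_\tau^t a_n(\sigma)\,d\sigma} a_n(\tau)^2 \, d\tau$. Then for every $n \geq 0$ and every $t \in [0,T]$, $a_n(t) \leq \dfrac{C M}{1 - 2 C^2 M t}$. -/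
open MeasureTheory

/-- Abstract recursive bound underlying the uniform estimates for the Picard iterates
of the Euler–Poincaré equations. -/
theorem picard_uniform_bound (C M T : ℝ) (a : ℕ → ℝ → ℝ)
    (hC : 1 ≤ C) (hM : 0 < M) (hT : 0 < T)
    (hCMT : 2 * C ^ 2 * M * T < 1)
    (hcont : ∀ n, ContinuousOn (a n) (Set.Icc 0 T))
    (hnonneg : ∀ n, ∀ t ∈ Set.Icc (0 : ℝ) T, 0 ≤ a n t)
    (h0 : ∀ t ∈ Set.Icc (0 : ℝ) T, a 0 t = 0)
    (hrec : ∀ n, ∀ t ∈ Set.Icc (0 : ℝ) T,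
      a (n + 1) t ≤ C * Real.exp (C * ∫ τ in (0 : ℝ)..t, a n τ) * M
        + C * ∫ τ in (0 : ℝ)..t, Real.exp (C * ∫ σ in τ..t, a n σ) * (a n τ) ^ 2) :
    ∀ n, ∀ t ∈ Set.Icc (0 : ℝ) T, a n t ≤ C * M / (1 - 2 * C ^ 2 * M * t) := by
  have hC0 : 0 < C := by linarith
  obtain ⟨k, hk⟩ : ∃ k, k = 2 * C ^ 2 * M := ⟨_, rfl⟩
  have hk0 : 0 < k := by rw [hk]; positivity
  rw [← hk] at hCMT ⊢
  have hpos : ∀ t ∈ Set.Icc (0 : ℝ) T, 0 < 1 - k * t := by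
    intro t ht
    have := mul_le_mul_of_nonneg_left ht.2 hk0.le
    linarith
  obtain ⟨s, hs⟩ : ∃ s : ℝ → ℝ, s = fun t => Real.sqrt (1 - k * t) := ⟨_, rfl⟩
  have hspos : ∀ t ∈ Set.Icc (0 : ℝ) T, 0 < s t := by
    intro t ht
    rw [hs]
    exact Real.sqrt_pos.2 (hpos t ht)
  have hsq : ∀ t ∈ Set.Icc (0 : ℝ) T, s t ^ 2 = 1 - k * t := by
    intro t ht
    rw [hs]
    exact Real.sq_sqrt (hpos t ht).le
  have hs0 : s 0 = 1 := by simp [hs]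
  have hsd : ∀ t ∈ Set.Icc (0 : ℝ) T, HasDerivAt s (-k / (2 * s t)) t := by
    intro t ht
    have h1 : HasDerivAt (fun t : ℝ => 1 - k * t) (-k) t := by
      simpa using ((hasDerivAt_id t).const_mul k).const_sub 1
    have h2 := h1.sqrt (hpos t ht).ne'
    rw [hs]
    exact h2
  have hscont : ContinuousOn s (Set.Icc 0 T) := fun t ht =>
    (hsd t ht).continuousAt.continuousWithinAt
  have hsub : ∀ τ t : ℝ, 0 ≤ τ → τ ≤ t → t ≤ T → Set.uIcc τ t ⊆ Set.Icc 0 T := by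
    intro τ t h1 h2 h3
    rw [Set.uIcc_of_le h2]
    exact Set.Icc_subset_Icc h1 h3
  intro n
  induction n with
  | zero =>
    intro t ht
    rw [h0 t ht]
    have := hpos t ht
    positivity
  | succ n ih =>
    have ih2 : ∀ t ∈ Set.Icc (0 : ℝ) T, a n t ≤ C * M / s t ^ 2 := by
      intro t ht
      rw [hsq t ht]
      exact ih t ht
    have hexp : ∀ τ t : ℝ, 0 ≤ τ → τ ≤ t → t ≤ T →
        Real.exp (C * ∫ σ in τ..t, a n σ) ≤ s τ / s t := by
      intro τ t h1 h2 h3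
      have hss := hsub τ t h1 h2 h3
      have hτ : τ ∈ Set.Icc (0 : ℝ) T := ⟨h1, h2.trans h3⟩
      have htt : t ∈ Set.Icc (0 : ℝ) T := ⟨h1.trans h2, h3⟩
      have hgi : IntervalIntegrable (fun σ => C * M / s σ ^ 2) volume τ t := by
        apply ContinuousOn.intervalIntegrable
        exact ContinuousOn.div continuousOn_const ((hscont.mono hss).pow 2)
          (fun x hx => (pow_pos (hspos x (hss hx)) 2).ne')
      have hle : (∫ σ in τ..t, a n σ) ≤ ∫ σ in τ..t, C * M / s σ ^ 2 := by
        apply intervalIntegral.integral_mono_on h2 ((hcont n).mono hss).intervalIntegrable hgi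
        intro x hx
        exact ih2 x ⟨h1.trans hx.1, hx.2.trans h3⟩
      have heq : (∫ σ in τ..t, C * M / s σ ^ 2) = -(Real.log (s t)) / C - -(Real.log (s τ)) / C := by
        apply intervalIntegral.integral_eq_sub_of_hasDerivAt (f := fun σ => -(Real.log (s σ)) / C) _ hgi
        intro x hx
        have hp := hspos x (hss hx)
        have := (((hsd x (hss hx)).log hp.ne').neg).div_const C
        refine HasDerivAt.congr_deriv this ?_
        rw [hk]
        field_simp
      have : C * (∫ σ in τ..t, a n σ) ≤ Real.log (s τ / s t) := by
        rw [Real.log_div (hspos τ hτ).ne' (hspos t htt).ne']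
        calc C * (∫ σ in τ..t, a n σ) ≤ C * (-(Real.log (s t)) / C - -(Real.log (s τ)) / C) :=
              mul_le_mul_of_nonneg_left (hle.trans heq.le) hC0.le
          _ = _ := by field_simp; ring
      calc _ ≤ Real.exp (Real.log (s τ / s t)) := Real.exp_le_exp.2 this
        _ = _ := Real.exp_log (div_pos (hspos τ hτ) (hspos t htt))
    intro t ht
    have hp := hspos t ht
    have hss := hsub 0 t le_rfl ht.1 ht.2
    have hgi : IntervalIntegrable (fun σ => (C * M) ^ 2 / s t / s σ ^ 3) volume 0 t := by
      apply ContinuousOn.intervalIntegrable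
      exact ContinuousOn.div continuousOn_const ((hscont.mono hss).pow 3)
        (fun x hx => (pow_pos (hspos x (hss hx)) 3).ne')
    have heq : (∫ σ in (0 : ℝ)..t, (C * M) ^ 2 / s t / s σ ^ 3)
        = M / s t * (s t)⁻¹ - M / s t * (s 0)⁻¹ := by
      apply intervalIntegral.integral_eq_sub_of_hasDerivAt (f := fun σ => M / s t * (s σ)⁻¹) _ hgi
      intro x hx
      have hpx := hspos x (hss hx)
      have := ((hsd x (hss hx)).fun_inv hpx.ne').const_mul (M / s t)
      refine HasDerivAt.congr_deriv this ?_
      rw [hk]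
      field_simp
    have hle : (∫ τ in (0 : ℝ)..t, Real.exp (C * ∫ σ in τ..t, a n σ) * (a n τ) ^ 2)
        ≤ ∫ σ in (0 : ℝ)..t, (C * M) ^ 2 / s t / s σ ^ 3 := by
      by_cases hi : IntervalIntegrable
          (fun τ => Real.exp (C * ∫ σ in τ..t, a n σ) * (a n τ) ^ 2) volume 0 t
      · apply intervalIntegral.integral_mono_on ht.1 hi hgi
        intro x hx
        have hxT : x ∈ Set.Icc (0 : ℝ) T := ⟨hx.1, hx.2.trans ht.2⟩
        have hpx := hspos x hxT
        calc _ ≤ s x / s t * (C * M / s x ^ 2) ^ 2 :=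
              mul_le_mul (hexp x t hx.1 hx.2 ht.2)
                (pow_le_pow_left₀ (hnonneg n x hxT) (ih2 x hxT) 2) (by positivity) (by positivity)
          _ = _ := by field_simp
      · rw [intervalIntegral.integral_undef hi]
        apply intervalIntegral.integral_nonneg ht.1
        intro x hx
        have hpx := hspos x ⟨hx.1, hx.2.trans ht.2⟩
        positivity
    have he := hexp 0 t le_rfl ht.1 ht.2
    rw [← hsq t ht]
    calc _ ≤ _ := hrec n t ht
      _ ≤ C * (s 0 / s t) * M + C * (M / s t * (s t)⁻¹ - M / s t * (s 0)⁻¹) := by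
        rw [← heq]
        gcongr
      _ = _ := by
        rw [hs0]
        field_simp
        ring
end

section
/- For every integer $d \geq 1$, every $s \in \mathbb{R}$ and every $n \in \mathbb{N}$, the Fourier transform of the Schwartz function $g_n \cdot \partial_{x_1} f_n$ (with the convention $\hat{f}(\xi) = \int_{\mathbb{R}^d} f(x) e^{-i x \cdot \xi}\, dx$) is supported in the annulus $\{\xi \in \mathbb{R}^d : \tfrac{17}{12} 2^n - 1 \leq |\xi| \leq \tfrac{17}{12} 2^n + 1\}$, where $|\xi|$ denotes the Euclidean norm. -/
open MeasureTheory
open scoped RealInnerProductSpace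

/-- The Fourier transform on `ℝ` with the convention `f̂(ξ) = ∫ f(x) e^{-i x ξ} dx`. -/
noncomputable def fourierTransform1 (f : ℝ → ℝ) (ξ : ℝ) : ℂ :=
  ∫ x : ℝ, (f x : ℂ) * Complex.exp (-Complex.I * (x : ℂ) * (ξ : ℂ))

/-- The Fourier transform on `ℝ^d` with the convention `f̂(ξ) = ∫ f(x) e^{-i x·ξ} dx`. -/
noncomputable def fourierTransformD {d : ℕ} (f : EuclideanSpace ℝ (Fin d) → ℝ)
    (ξ : EuclideanSpace ℝ (Fin d)) : ℂ :=
  ∫ x : EuclideanSpace ℝ (Fin d),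
    (f x : ℂ) * Complex.exp (-Complex.I * ((⟪x, ξ⟫ : ℝ) : ℂ))

/-- The profile `f_n(x) = 2^{-ns} φ(x₁) sin((17/12) 2^n x₁) φ(x₂) ⋯ φ(x_d)`. -/
noncomputable def fprof (d : ℕ) (hd : 0 < d) (φ : ℝ → ℝ) (s : ℝ) (n : ℕ)
    (x : EuclideanSpace ℝ (Fin d)) : ℝ :=
  (2 : ℝ) ^ (-(n : ℝ) * s) * φ (x ⟨0, hd⟩) * Real.sin (17 / 12 * 2 ^ n * x ⟨0, hd⟩) *
    ∏ i ∈ Finset.univ.filter (fun i : Fin d => i ≠ ⟨0, hd⟩), φ (x i)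

/-- The profile `g_n(x) = 2^{-n} φ(x₁) φ(x₂) ⋯ φ(x_d)`. -/
noncomputable def gprof (d : ℕ) (φ : ℝ → ℝ) (n : ℕ)
    (x : EuclideanSpace ℝ (Fin d)) : ℝ :=
  (2 : ℝ) ^ (-(n : ℝ)) * ∏ i : Fin d, φ (x i)

/-- The partial derivative in the first coordinate. -/
noncomputable def pderivOne (d : ℕ) (hd : 0 < d) (f : EuclideanSpace ℝ (Fin d) → ℝ)
    (x : EuclideanSpace ℝ (Fin d)) : ℝ :=
  fderiv ℝ f x (EuclideanSpace.single ⟨0, hd⟩ 1)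

open scoped FourierTransform in
lemma aux_ft_eq (h : ℝ → ℂ) (ξ : ℝ) :
    ∫ x : ℝ, h x * Complex.exp (-Complex.I * (x : ℂ) * (ξ : ℂ)) = 𝓕 h (ξ / (2 * Real.pi)) := by
  rw [Real.fourier_real_eq_integral_exp_smul]
  congr 1
  ext x
  rw [smul_eq_mul, mul_comm]
  congr 2
  push_cast
  have : (Real.pi : ℂ) ≠ 0 := by exact_mod_cast Real.pi_ne_zero
  field_simp

open scoped FourierTransform in
lemma aux_prod (f g : SchwartzMap ℝ ℂ) (R : ℝ)
    (hf : ∀ ξ : ℝ, R ≤ |ξ| → ∫ x : ℝ, f x * Complex.exp (-Complex.I * (x : ℂ) * (ξ : ℂ)) = 0)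
    (hg : ∀ ξ : ℝ, R ≤ |ξ| → ∫ x : ℝ, g x * Complex.exp (-Complex.I * (x : ℂ) * (ξ : ℂ)) = 0)
    (ξ : ℝ) (hξ : 2 * R ≤ |ξ|) :
    ∫ x : ℝ, (f x * g x) * Complex.exp (-Complex.I * (x : ℂ) * (ξ : ℂ)) = 0 := by
  have hpi := Real.pi_pos
  set u : SchwartzMap ℝ ℂ := 𝓕⁻ f with hu
  have hfu : (f : ℝ → ℂ) = 𝓕 (u : ℝ → ℂ) := by
    rw [← SchwartzMap.fourier_coe, hu, FourierTransform.fourier_fourierInv_eq]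
  set k : ℝ → ℂ := fun x => g x * Complex.exp (-Complex.I * (x : ℂ) * (ξ : ℂ)) with hk
  have hkint : Integrable k := by
    refine g.integrable.mul_bdd (c := 1) (by fun_prop) (Filter.Eventually.of_forall fun x => ?_)
    rw [Complex.norm_exp]
    simp
  have key := VectorFourier.integral_fourierIntegral_smul_eq_flip (L := innerₗ ℝ)
    (μ := volume) (ν := volume) Real.continuous_fourierChar continuous_inner u.integrable hkint
  have e1 : ∫ x : ℝ, (f x * g x) * Complex.exp (-Complex.I * (x : ℂ) * (ξ : ℂ))
      = ∫ x, 𝓕 (u : ℝ → ℂ) x • k x := by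
    congr 1; ext x; rw [← hfu]; simp [hk, mul_assoc]
  rw [e1]
  refine Eq.trans key ?_
  have : ∀ x : ℝ, u x • VectorFourier.fourierIntegral Real.fourierChar volume (innerₗ ℝ).flip k x
      = 0 := by
    intro x
    rw [flip_innerₗ]
    change u x • 𝓕 k x = 0
    have h1 : u x = 𝓕 (f : ℝ → ℂ) (-x) := by
      rw [hu, SchwartzMap.fourierInv_coe, Real.fourierInv_eq_fourier_neg]
    have h2 : u x = ∫ y : ℝ, f y * Complex.exp (-Complex.I * (y : ℂ) * ((-(2 * Real.pi * x) : ℝ) : ℂ)) := by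
      rw [h1, aux_ft_eq]; congr 1; field_simp
    have h3 : 𝓕 k x = ∫ y : ℝ, g y * Complex.exp (-Complex.I * (y : ℂ) * ((2 * Real.pi * x + ξ : ℝ) : ℂ)) := by
      have : x = (2 * Real.pi * x) / (2 * Real.pi) := by field_simp
      rw [this, ← aux_ft_eq]
      congr 1; ext y
      simp only [hk]
      rw [mul_assoc, ← Complex.exp_add, ← this]
      congr 2
      push_cast; ring
    by_cases hx : R ≤ |2 * Real.pi * x|
    · rw [h2, hf _ (by rwa [abs_neg]), zero_smul]
    · rw [h3, hg, smul_zero]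
      have := abs_sub_abs_le_abs_sub ξ (-(2 * Real.pi * x))
      rw [abs_neg, sub_neg_eq_add, add_comm ξ] at this
      linarith
  refine Eq.trans (integral_congr_ae (Filter.Eventually.of_forall this)) (by simp)

open scoped FourierTransform in
lemma aux_deriv (f : SchwartzMap ℝ ℂ) (ξ : ℝ)
    (hf : ∫ x : ℝ, f x * Complex.exp (-Complex.I * (x : ℂ) * (ξ : ℂ)) = 0) :
    ∫ x : ℝ, deriv f x * Complex.exp (-Complex.I * (x : ℂ) * (ξ : ℂ)) = 0 := by
  rw [aux_ft_eq] at hf ⊢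
  rw [Real.fourier_deriv f.integrable f.differentiable (SchwartzMap.derivCLM ℂ ℂ f).integrable]
  simp [hf]

/-- complexification -/
noncomputable def cplx (φ : SchwartzMap ℝ ℝ) : SchwartzMap ℝ ℂ :=
  SchwartzMap.postcompCLM (𝕜 := ℝ) Complex.ofRealCLM φ

lemma cplx_apply (φ : SchwartzMap ℝ ℝ) (x : ℝ) : cplx φ x = (φ x : ℂ) := rfl

lemma cplx_deriv (φ : SchwartzMap ℝ ℝ) (x : ℝ) : deriv (cplx φ) x = ((deriv φ x : ℝ) : ℂ) := by
  have := (φ.differentiable x).hasDerivAt.ofReal_comp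
  exact this.deriv

lemma aux_bdd (f : ℝ → ℂ) (hf : Integrable f) (ξ : ℝ) :
    Integrable (fun x : ℝ => f x * Complex.exp (-Complex.I * (x : ℂ) * (ξ : ℂ))) := by
  refine hf.mul_bdd (c := 1) (by fun_prop) (Filter.Eventually.of_forall fun x => ?_)
  rw [Complex.norm_exp]
  simp

lemma aux_one (φ : SchwartzMap ℝ ℝ) (R a : ℝ)
    (hφ0 : ∀ ξ : ℝ, R ≤ |ξ| → fourierTransform1 (fun x => φ x) ξ = 0)
    (ξ : ℝ) (h1 : 2 * R ≤ |ξ - a|) (h2 : 2 * R ≤ |ξ + a|) :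
    ∫ x : ℝ, ((φ x * (deriv φ x * Real.sin (a * x) + φ x * (a * Real.cos (a * x))) : ℝ) : ℂ) *
      Complex.exp (-Complex.I * (x : ℂ) * (ξ : ℂ)) = 0 := by
  have hf : ∀ ξ : ℝ, R ≤ |ξ| →
      ∫ x : ℝ, cplx φ x * Complex.exp (-Complex.I * (x : ℂ) * (ξ : ℂ)) = 0 := hφ0
  have hg : ∀ ξ : ℝ, R ≤ |ξ| → ∫ x : ℝ, (SchwartzMap.derivCLM ℂ ℂ (cplx φ)) x *
      Complex.exp (-Complex.I * (x : ℂ) * (ξ : ℂ)) = 0 := fun ξ h => aux_deriv _ _ (hf ξ h)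
  have hff := aux_prod _ _ R hf hf
  have hfg := aux_prod _ _ R hf hg
  have iff : Integrable (fun x => cplx φ x * cplx φ x) :=
    (SchwartzMap.pairing (ContinuousLinearMap.mul ℂ ℂ) (cplx φ) (cplx φ)).integrable
  have ifg : Integrable (fun x => cplx φ x * SchwartzMap.derivCLM ℂ ℂ (cplx φ) x) :=
    (SchwartzMap.pairing (ContinuousLinearMap.mul ℂ ℂ) (cplx φ)
      (SchwartzMap.derivCLM ℂ ℂ (cplx φ))).integrable
  have j1 := (aux_bdd _ ifg (ξ - a)).const_mul (-Complex.I / 2)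
  have j2 := (aux_bdd _ ifg (ξ + a)).const_mul (Complex.I / 2)
  have j3 := (aux_bdd _ iff (ξ - a)).const_mul ((a : ℂ) / 2)
  have j4 := (aux_bdd _ iff (ξ + a)).const_mul ((a : ℂ) / 2)
  have e : ∀ x : ℝ, ((φ x * (deriv φ x * Real.sin (a * x) + φ x * (a * Real.cos (a * x))) : ℝ) : ℂ) *
      Complex.exp (-Complex.I * (x : ℂ) * (ξ : ℂ)) =
      ((-Complex.I / 2) * ((cplx φ x * SchwartzMap.derivCLM ℂ ℂ (cplx φ) x) *
          Complex.exp (-Complex.I * (x : ℂ) * ((ξ - a : ℝ) : ℂ)))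
        + (Complex.I / 2) * ((cplx φ x * SchwartzMap.derivCLM ℂ ℂ (cplx φ) x) *
          Complex.exp (-Complex.I * (x : ℂ) * ((ξ + a : ℝ) : ℂ))))
        + (((a : ℂ) / 2) * ((cplx φ x * cplx φ x) *
          Complex.exp (-Complex.I * (x : ℂ) * ((ξ - a : ℝ) : ℂ)))
        + ((a : ℂ) / 2) * ((cplx φ x * cplx φ x) *
          Complex.exp (-Complex.I * (x : ℂ) * ((ξ + a : ℝ) : ℂ)))) := by
    intro x
    rw [SchwartzMap.derivCLM_apply, cplx_deriv, cplx_apply]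
    push_cast
    have e1 : Complex.exp (-Complex.I * (x : ℂ) * ((ξ : ℂ) - a)) =
        Complex.exp (a * x * Complex.I) * Complex.exp (-Complex.I * (x : ℂ) * (ξ : ℂ)) := by
      rw [← Complex.exp_add]; congr 1; ring
    have e2 : Complex.exp (-Complex.I * (x : ℂ) * ((ξ : ℂ) + a)) =
        Complex.exp (-(a * x) * Complex.I) * Complex.exp (-Complex.I * (x : ℂ) * (ξ : ℂ)) := by
      rw [← Complex.exp_add]; congr 1; ring
    rw [e1, e2, Complex.sin, Complex.cos]
    ring
  simp_rw [e]
  refine (integral_add (j1.add j2) (j3.add j4)).trans ?_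
  simp only [Pi.add_apply]
  rw [integral_add j1 j2, integral_add j3 j4]
  simp only [integral_const_mul]
  rw [hff _ h1, hff _ h2, hfg _ h1, hfg _ h2]
  simp

lemma aux_two (φ : SchwartzMap ℝ ℝ) (R : ℝ)
    (hφ0 : ∀ ξ : ℝ, R ≤ |ξ| → fourierTransform1 (fun x => φ x) ξ = 0)
    (ξ : ℝ) (h1 : 2 * R ≤ |ξ|) :
    ∫ x : ℝ, ((φ x * φ x : ℝ) : ℂ) * Complex.exp (-Complex.I * (x : ℂ) * (ξ : ℂ)) = 0 := by
  have hf : ∀ ξ : ℝ, R ≤ |ξ| →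
      ∫ x : ℝ, cplx φ x * Complex.exp (-Complex.I * (x : ℂ) * (ξ : ℂ)) = 0 := hφ0
  simpa [cplx_apply] using aux_prod _ _ R hf hf ξ h1

lemma aux_pderiv (d : ℕ) (hd : 0 < d) (φ : SchwartzMap ℝ ℝ) (s : ℝ) (n : ℕ)
    (x : EuclideanSpace ℝ (Fin d)) :
    pderivOne d hd (fprof d hd (fun y => φ y) s n) x =
      (2 : ℝ) ^ (-(n : ℝ) * s) * (deriv φ (x ⟨0, hd⟩) * Real.sin (17 / 12 * 2 ^ n * x ⟨0, hd⟩) +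
        φ (x ⟨0, hd⟩) * (17 / 12 * 2 ^ n * Real.cos (17 / 12 * 2 ^ n * x ⟨0, hd⟩))) *
      ∏ i ∈ Finset.univ.filter (fun i : Fin d => i ≠ ⟨0, hd⟩), φ (x i) := by
  have hφ : Differentiable ℝ φ := φ.differentiable
  have hdiff : DifferentiableAt ℝ (fprof d hd (fun y => φ y) s n) x := by
    have : ∀ i : Fin d, Differentiable ℝ (fun x : EuclideanSpace ℝ (Fin d) => φ (x i)) :=
      fun i => hφ.comp (by fun_prop)
    unfold fprof
    fun_prop
  rw [pderivOne, ← hdiff.lineDeriv_eq_fderiv, lineDeriv]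
  have hfun : (fun t : ℝ => fprof d hd (fun y => φ y) s n (x + t • EuclideanSpace.single ⟨0, hd⟩ 1))
      = fun t : ℝ => (2 : ℝ) ^ (-(n : ℝ) * s) * (φ (x ⟨0, hd⟩ + t) *
        Real.sin (17 / 12 * 2 ^ n * (x ⟨0, hd⟩ + t))) *
      ∏ i ∈ Finset.univ.filter (fun i : Fin d => i ≠ ⟨0, hd⟩), φ (x i) := by
    ext t
    unfold fprof
    congr 1
    · simp [mul_assoc]
    · refine Finset.prod_congr rfl fun i hi => ?_
      simp only [Finset.mem_filter, Finset.mem_univ, true_and] at hi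
      simp [hi]
  rw [hfun]
  have d1 : HasDerivAt (fun t : ℝ => x ⟨0, hd⟩ + t) 1 0 := by
    simpa using (hasDerivAt_id (0 : ℝ)).const_add (x ⟨0, hd⟩)
  have d2 : HasDerivAt (fun t : ℝ => φ (x ⟨0, hd⟩ + t)) (deriv φ (x ⟨0, hd⟩ + 0) * 1) 0 :=
    (hφ (x ⟨0, hd⟩ + 0)).hasDerivAt.comp (0 : ℝ) d1
  have d3 := (d1.const_mul (17 / 12 * 2 ^ n : ℝ)).sin
  have := ((d2.mul d3).const_mul ((2 : ℝ) ^ (-(n : ℝ) * s))).mul_const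
    (∏ i ∈ Finset.univ.filter (fun i : Fin d => i ≠ ⟨0, hd⟩), φ (x i))
  refine Eq.trans this.deriv ?_
  simp only [add_zero, mul_one]
  ring

lemma aux_fourier (d : ℕ) (hd : 0 < d) (φ : SchwartzMap ℝ ℝ) (s : ℝ) (n : ℕ)
    (ξ : EuclideanSpace ℝ (Fin d)) :
    fourierTransformD (fun x =>
        gprof d (fun y => φ y) n x * pderivOne d hd (fprof d hd (fun y => φ y) s n) x) ξ =
      (((2 : ℝ) ^ (-(n : ℝ)) * (2 : ℝ) ^ (-(n : ℝ) * s) : ℝ) : ℂ) *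
      ∏ i : Fin d, ∫ t : ℝ, ((if i = ⟨0, hd⟩ then
        (φ t * (deriv φ t * Real.sin (17 / 12 * 2 ^ n * t) +
          φ t * (17 / 12 * 2 ^ n * Real.cos (17 / 12 * 2 ^ n * t)))) else φ t * φ t : ℝ) : ℂ) *
        Complex.exp (-Complex.I * (t : ℂ) * (ξ i : ℂ)) := by
  unfold fourierTransformD
  rw [← integral_fintype_prod_volume_eq_prod (fun (i : Fin d) (t : ℝ) => ((if i = ⟨0, hd⟩ then
        (φ t * (deriv φ t * Real.sin (17 / 12 * 2 ^ n * t) +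
          φ t * (17 / 12 * 2 ^ n * Real.cos (17 / 12 * 2 ^ n * t)))) else φ t * φ t : ℝ) : ℂ) *
        Complex.exp (-Complex.I * (t : ℂ) * (ξ i : ℂ))),
    ← (EuclideanSpace.volume_preserving_symm_measurableEquiv_toLp (Fin d)).integral_comp
      (MeasurableEquiv.measurableEmbedding _), ← integral_const_mul]
  congr 1
  ext x
  beta_reduce
  simp only [MeasurableEquiv.toLp_symm_apply]
  rw [aux_pderiv, gprof, Finset.prod_mul_distrib, ← Complex.exp_sum,
    ← Complex.ofReal_prod, ← mul_assoc (Complex.ofReal _) (Complex.ofReal _), ← Complex.ofReal_mul]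
  congr 1
  · refine congrArg Complex.ofReal ?_
    have hm : (⟨0, hd⟩ : Fin d) ∈ Finset.univ := Finset.mem_univ _
    have hfil : Finset.univ.filter (fun i : Fin d => i ≠ ⟨0, hd⟩) = Finset.univ.erase ⟨0, hd⟩ := by
      ext i; simp
    rw [hfil, ← Finset.mul_prod_erase _ _ hm, ← Finset.mul_prod_erase _ _ hm]
    have hp : ∀ g : Fin d → ℝ, ∏ i ∈ Finset.univ.erase (⟨0, hd⟩ : Fin d),
        (if i = ⟨0, hd⟩ then g i else φ (x i) * φ (x i)) =
        (∏ i ∈ Finset.univ.erase (⟨0, hd⟩ : Fin d), φ (x i)) *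
        (∏ i ∈ Finset.univ.erase (⟨0, hd⟩ : Fin d), φ (x i)) := by
      intro g
      rw [← Finset.prod_mul_distrib]
      refine Finset.prod_congr rfl fun i hi => ?_
      rw [if_neg (Finset.ne_of_mem_erase hi)]
    have := hp (fun i => φ (x i) * (deriv φ (x i) * Real.sin (17 / 12 * 2 ^ n * x i) +
          φ (x i) * (17 / 12 * 2 ^ n * Real.cos (17 / 12 * 2 ^ n * x i))))
    rw [this, if_pos rfl]
    ring
  · refine congrArg Complex.exp ?_
    rw [PiLp.inner_apply]
    push_cast
    rw [Finset.mul_sum]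
    refine Finset.sum_congr rfl fun i _ => ?_
    simp
    ring

lemma aux_norm (d : ℕ) (hd : 0 < d) (a : ℝ) (b : ℝ) (ha : 0 ≤ a) (hb : |b| = a)
    (ξ : EuclideanSpace ℝ (Fin d)) (h0 : |ξ ⟨0, hd⟩ - b| < 2 * (2 : ℝ) ^ (-(d : ℤ)))
    (h : ∀ i, i ≠ ⟨0, hd⟩ → |ξ i| < 2 * (2 : ℝ) ^ (-(d : ℤ))) :
    a - 1 ≤ ‖ξ‖ ∧ ‖ξ‖ ≤ a + 1 := by
  set v : EuclideanSpace ℝ (Fin d) := EuclideanSpace.single ⟨0, hd⟩ b with hv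
  have hvn : ‖v‖ = a := by rw [hv, EuclideanSpace.norm_single, Real.norm_eq_abs, hb]
  have hc : ∀ i, ‖(ξ - v) i‖ ^ 2 ≤ (2 * (2 : ℝ) ^ (-(d : ℤ))) ^ 2 := by
    intro i
    refine pow_le_pow_left₀ (norm_nonneg _) ?_ 2
    by_cases hi : i = ⟨0, hd⟩
    · subst hi; simpa [hv] using h0.le
    · simpa [hv, hi] using (h i hi).le
  have hsq : ‖ξ - v‖ ^ 2 ≤ 1 := by
    rw [EuclideanSpace.norm_sq_eq]
    refine (Finset.sum_le_sum fun i _ => hc i).trans ?_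
    simp only [Finset.sum_const, Finset.card_univ, Fintype.card_fin, nsmul_eq_mul]
    obtain ⟨m, rfl⟩ : ∃ m, d = m + 1 := ⟨d - 1, by omega⟩
    have hm : (m + 1 : ℝ) ≤ 2 ^ m := by exact_mod_cast Nat.lt_two_pow_self
    have hm1 : (1 : ℝ) ≤ 2 ^ m := one_le_pow₀ (by norm_num)
    have e : 2 * (2 : ℝ) ^ (-((m + 1 : ℕ) : ℤ)) = (2 ^ m)⁻¹ := by
      rw [zpow_neg, zpow_natCast, pow_succ]; field_simp
    rw [e, inv_pow, ← div_eq_mul_inv, div_le_one (by positivity)]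
    push_cast
    nlinarith
  have hle : ‖ξ - v‖ ≤ 1 := by nlinarith [norm_nonneg (ξ - v)]
  have t := (abs_norm_sub_norm_le ξ v).trans hle
  rw [hvn, abs_le] at t
  constructor <;> linarith

/-- The Fourier transform of `g_n ∂₁ f_n` is supported in the annulus
`(17/12) 2^n - 1 ≤ |ξ| ≤ (17/12) 2^n + 1`. -/
theorem gprof_mul_pderiv_fprof_fourier_support (d : ℕ) (hd : 1 ≤ d) (φ : SchwartzMap ℝ ℝ)
    (hφ1 : ∀ ξ : ℝ, |ξ| ≤ (4 : ℝ) ^ (-(d : ℤ)) → fourierTransform1 (fun x => φ x) ξ = 1)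
    (hφ0 : ∀ ξ : ℝ, (2 : ℝ) ^ (-(d : ℤ)) ≤ |ξ| → fourierTransform1 (fun x => φ x) ξ = 0)
    (s : ℝ) (n : ℕ) :
    Function.support (fourierTransformD (fun x =>
        gprof d (fun y => φ y) n x * pderivOne d hd (fprof d hd (fun y => φ y) s n) x)) ⊆
      {ξ : EuclideanSpace ℝ (Fin d) |
        17 / 12 * 2 ^ n - 1 ≤ ‖ξ‖ ∧ ‖ξ‖ ≤ 17 / 12 * 2 ^ n + 1} := by
  intro ξ hξ
  rw [Function.mem_support, aux_fourier] at hξ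
  have hp := right_ne_zero_of_mul hξ
  rw [Finset.prod_ne_zero_iff] at hp
  have h : ∀ i, i ≠ (⟨0, hd⟩ : Fin d) → |ξ i| < 2 * (2 : ℝ) ^ (-(d : ℤ)) := by
    intro i hi
    by_contra hc
    refine hp i (Finset.mem_univ _) ?_
    simp only [if_neg hi]
    exact aux_two φ _ hφ0 _ (not_lt.mp hc)
  have h0 : |ξ ⟨0, hd⟩ - 17 / 12 * 2 ^ n| < 2 * (2 : ℝ) ^ (-(d : ℤ)) ∨
      |ξ ⟨0, hd⟩ + 17 / 12 * 2 ^ n| < 2 * (2 : ℝ) ^ (-(d : ℤ)) := by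
    by_contra hc
    push Not at hc
    refine hp ⟨0, hd⟩ (Finset.mem_univ _) ?_
    simp only [if_true]
    exact aux_one φ _ _ hφ0 _ hc.1 hc.2
  have ha : (0 : ℝ) ≤ 17 / 12 * 2 ^ n := by positivity
  rcases h0 with h0 | h0
  · exact aux_norm d hd _ (17 / 12 * 2 ^ n) ha (abs_of_nonneg ha) ξ h0 h
  · exact aux_norm d hd _ (-(17 / 12 * 2 ^ n)) ha (by rw [abs_neg, abs_of_nonneg ha]) ξ
      (by rwa [sub_neg_eq_add]) h
end

section
/- Let $d \geq 1$, $1 \leq p < \infty$, $s \in \mathbb{R}$ and $n \in \mathbb{N}$. Then $2^{ns} \| g_n \, \partial_{x_1} f_n \|_{L^p(\mathbb{R}^d)} \; \geq \; \tfrac{17}{12} \big\| \phi^2(\cdot) \cos(\tfrac{17}{12} 2^n \cdot) \big\|_{L^p(\mathbb{R})} \, \| \phi \|_{L^{2p}(\mathbb{R})}^{2(d-1)} \; - \; 2^{-n} \, \| \phi \, \phi' \|_{L^p(\mathbb{R})} \, \| \phi \|_{L^{2p}(\mathbb{R})}^{2(d-1)}.$ -/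
open MeasureTheory
open scoped RealInnerProductSpace ENNReal

/-- The Lp norm of a tensor product is the product of the Lp norms. -/
lemma toReal_eLpNorm_prod {d : ℕ} (F : Fin d → ℝ → ℝ) (hF : ∀ i, Continuous (F i))
    (p : ℝ≥0∞) (hp : p ≠ 0) (hp' : p ≠ ⊤) :
    (eLpNorm (fun x : EuclideanSpace ℝ (Fin d) => ∏ i, F i (x i)) p volume).toReal
      = ∏ i, (eLpNorm (F i) p volume).toReal := by
  have hc : Continuous (fun x : EuclideanSpace ℝ (Fin d) => ∏ i, F i (x i)) := by
    refine continuous_finsetProd _ fun i _ => (hF i).comp ?_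
    fun_prop
  have h1 : ∀ i, (eLpNorm (F i) p volume).toReal
      = (∫ t, ‖F i t‖ ^ p.toReal) ^ p.toReal⁻¹ := by
    intro i
    rw [toReal_eLpNorm (hF i).aestronglyMeasurable,
      lpNorm_eq_integral_norm_rpow_toReal hp hp' (hF i).aestronglyMeasurable]
  rw [toReal_eLpNorm hc.aestronglyMeasurable,
      lpNorm_eq_integral_norm_rpow_toReal hp hp' hc.aestronglyMeasurable]
  simp_rw [h1]
  rw [Real.finsetProd_rpow _ _ (fun i _ => integral_nonneg fun t => by positivity)]
  congr 1
  rw [← integral_fintype_prod_volume_eq_prod,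
    ← (PiLp.volume_preserving_toLp (Fin d)).integral_comp
      (MeasurableEquiv.toLp 2 _).measurableEmbedding]
  congr 1
  ext x
  simp only [norm_prod]
  rw [Real.finsetProd_rpow _ _ (fun i _ => norm_nonneg _)]

lemma toReal_eLpNorm_sq (f : ℝ → ℝ) (p : ℝ≥0∞) :
    (eLpNorm (fun x => f x ^ 2) p volume).toReal
      = (eLpNorm f (2 * p) volume).toReal ^ 2 := by
  have h := eLpNorm_norm_rpow (μ := volume) (p := p) f (q := 2) (by norm_num)
  rw [← ENNReal.toReal_pow]
  congr 1
  have h2 : ENNReal.ofReal 2 = 2 := by norm_num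
  rw [h2, mul_comm p 2] at h
  have h3 : (eLpNorm f (2 * p) volume) ^ (2 : ℕ) = (eLpNorm f (2 * p) volume) ^ (2 : ℝ) := by
    rw [← ENNReal.rpow_natCast]; norm_num
  rw [h3, ← h]
  refine eLpNorm_congr_norm_ae (ae_of_all _ fun x => ?_)
  simp

lemma pderivOne_fprof (d : ℕ) (hd : 0 < d) (φ : SchwartzMap ℝ ℝ) (s : ℝ) (n : ℕ)
    (x : EuclideanSpace ℝ (Fin d)) :
    pderivOne d hd (fprof d hd (fun y => φ y) s n) x =
      (2 : ℝ) ^ (-(n : ℝ) * s) *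
        (deriv (fun y => φ y) (x ⟨0, hd⟩) * Real.sin (17 / 12 * 2 ^ n * x ⟨0, hd⟩) +
          φ (x ⟨0, hd⟩) * (Real.cos (17 / 12 * 2 ^ n * x ⟨0, hd⟩) * (17 / 12 * 2 ^ n))) *
        ∏ i ∈ Finset.univ.filter (fun i : Fin d => i ≠ ⟨0, hd⟩), φ (x i) := by
  have hφ : Differentiable ℝ (fun y => φ y) := φ.differentiable
  have hco : ∀ i : Fin d, Differentiable ℝ (fun x : EuclideanSpace ℝ (Fin d) => x i) := by
    intro i; fun_prop
  have hcomp : ∀ i : Fin d, Differentiable ℝ (fun x : EuclideanSpace ℝ (Fin d) => φ (x i)) :=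
    fun i => hφ.comp (hco i)
  have hdiff : DifferentiableAt ℝ (fprof d hd (fun y => φ y) s n) x := by
    unfold fprof
    have := hcomp ⟨0, hd⟩
    have := hco ⟨0, hd⟩
    have : Differentiable ℝ (fun x : EuclideanSpace ℝ (Fin d) =>
        ∏ i ∈ Finset.univ.filter (fun i : Fin d => i ≠ ⟨0, hd⟩), φ (x i)) := by
      have hcd : ContDiff ℝ 1 (fun x : EuclideanSpace ℝ (Fin d) =>
          ∏ i ∈ Finset.univ.filter (fun i : Fin d => i ≠ ⟨0, hd⟩), φ (x i)) :=
        contDiff_prod fun i _ => (φ.smooth 1).comp (by fun_prop)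
      exact hcd.differentiable (by norm_num)
    fun_prop
  unfold pderivOne
  rw [← hdiff.lineDeriv_eq_fderiv]
  unfold lineDeriv
  have key : (fun t : ℝ => fprof d hd (fun y => φ y) s n
      (x + t • EuclideanSpace.single ⟨0, hd⟩ 1)) = fun t : ℝ =>
      (2 : ℝ) ^ (-(n : ℝ) * s) * (φ (x ⟨0, hd⟩ + t) *
        Real.sin (17 / 12 * 2 ^ n * (x ⟨0, hd⟩ + t))) *
        ∏ i ∈ Finset.univ.filter (fun i : Fin d => i ≠ ⟨0, hd⟩), φ (x i) := by
    ext t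
    unfold fprof
    have : ∏ i ∈ Finset.univ.filter (fun i : Fin d => i ≠ ⟨0, hd⟩),
        φ ((x + t • EuclideanSpace.single ⟨0, hd⟩ (1 : ℝ) : EuclideanSpace ℝ (Fin d)) i) =
        ∏ i ∈ Finset.univ.filter (fun i : Fin d => i ≠ ⟨0, hd⟩), φ (x i) := by
      refine Finset.prod_congr rfl fun i hi => ?_
      have hi' : i ≠ ⟨0, hd⟩ := (Finset.mem_filter.1 hi).2
      simp [hi']
    rw [this]
    have h0 : (x + t • EuclideanSpace.single ⟨0, hd⟩ (1 : ℝ) : EuclideanSpace ℝ (Fin d)) ⟨0, hd⟩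
        = x ⟨0, hd⟩ + t := by simp
    rw [h0]
    ring
  rw [key]
  apply HasDerivAt.deriv
  refine HasDerivAt.mul_const (HasDerivAt.const_mul _ ?_) _
  set a := x ⟨0, hd⟩
  have hA : HasDerivAt (fun t : ℝ => a + t) 1 0 := (hasDerivAt_id (0 : ℝ)).const_add a
  have h1 : HasDerivAt (fun t : ℝ => φ (a + t)) (deriv (fun y => φ y) a) 0 := by
    have := HasDerivAt.comp (h₂ := fun y => φ y) (0 : ℝ) (hφ (a + 0)).hasDerivAt hA
    rw [add_zero, mul_one] at this
    exact this
  have h2 := (hA.const_mul (17 / 12 * 2 ^ n : ℝ)).sin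
  have h3 := h1.mul h2
  simp only [add_zero, mul_one] at h3
  exact h3

/-- Lower bound for `2^{ns} ‖g_n ∂₁ f_n‖_{L^p(ℝ^d)}`. -/
theorem gprof_mul_pderiv_fprof_lower_bound (d : ℕ) (hd : 1 ≤ d) (φ : SchwartzMap ℝ ℝ)
    (hφ1 : ∀ ξ : ℝ, |ξ| ≤ (4 : ℝ) ^ (-(d : ℤ)) → fourierTransform1 (fun x => φ x) ξ = 1)
    (hφ0 : ∀ ξ : ℝ, (2 : ℝ) ^ (-(d : ℤ)) ≤ |ξ| → fourierTransform1 (fun x => φ x) ξ = 0)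
    (p : ℝ≥0∞) (hp : 1 ≤ p) (hp' : p ≠ ⊤) (s : ℝ) (n : ℕ) :
    (2 : ℝ) ^ ((n : ℝ) * s) *
        (eLpNorm (fun x : EuclideanSpace ℝ (Fin d) =>
          gprof d (fun y => φ y) n x * pderivOne d hd (fprof d hd (fun y => φ y) s n) x)
            p volume).toReal
      ≥ 17 / 12 *
          (eLpNorm (fun x : ℝ => (φ x) ^ 2 * Real.cos (17 / 12 * 2 ^ n * x)) p volume).toReal *
          ((eLpNorm (fun x : ℝ => φ x) (2 * p) volume).toReal) ^ (2 * (d - 1))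
        - (2 : ℝ) ^ (-(n : ℝ)) *
            (eLpNorm (fun x : ℝ => φ x * deriv (fun y => φ y) x) p volume).toReal *
            ((eLpNorm (fun x : ℝ => φ x) (2 * p) volume).toReal) ^ (2 * (d - 1)) := by
  have hp0 : p ≠ 0 := (zero_lt_one.trans_le hp).ne'
  set i0 : Fin d := ⟨0, hd⟩ with hi0
  have hφc : Continuous (fun y => φ y) := φ.continuous
  have hφ'c : Continuous (deriv (fun y => φ y)) :=
    (φ.smooth 1).continuous_deriv le_rfl
  set H1 : ℝ → ℝ := fun t => φ t ^ 2 * Real.cos (17 / 12 * 2 ^ n * t) with hH1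
  set H2 : ℝ → ℝ := fun t => φ t * deriv (fun y => φ y) t with hH2
  set H3 : ℝ → ℝ := fun t => H2 t * Real.sin (17 / 12 * 2 ^ n * t) with hH3
  set H : ℝ → ℝ := fun t => (17 / 12 : ℝ) * H1 t + (2 : ℝ) ^ (-(n : ℝ)) * H3 t with hH
  have hH1c : Continuous H1 := by fun_prop
  have hH2c : Continuous H2 := by fun_prop
  have hH3c : Continuous H3 := by fun_prop
  have hHc : Continuous H := by fun_prop
  have h2n : (2 : ℝ) ^ (-(n : ℝ)) * 2 ^ n = 1 := by
    rw [Real.rpow_neg (by norm_num), Real.rpow_natCast]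
    exact inv_mul_cancel₀ (by positivity)
  have hs : (2 : ℝ) ^ ((n : ℝ) * s) * (2 : ℝ) ^ (-(n : ℝ) * s) = 1 := by
    rw [← Real.rpow_add (by norm_num)]
    simp
  let F : Fin d → ℝ → ℝ := fun i => if i = i0 then H else fun t => φ t ^ 2
  have hFc : ∀ i, Continuous (F i) := by
    intro i
    by_cases h : i = i0
    · simpa [F, h] using hHc
    · simp only [F, h, if_false]; fun_prop
  have hfun : (fun x : EuclideanSpace ℝ (Fin d) =>
      gprof d (fun y => φ y) n x * pderivOne d hd (fprof d hd (fun y => φ y) s n) x)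
      = (2 : ℝ) ^ (-(n : ℝ) * s) • (fun x : EuclideanSpace ℝ (Fin d) => ∏ i, F i (x i)) := by
    ext x
    rw [pderivOne_fprof]
    unfold gprof
    simp only [Pi.smul_apply, smul_eq_mul]
    rw [← hi0, Finset.filter_ne', ← Finset.mul_prod_erase _ (fun i => φ (x i)) (Finset.mem_univ i0),
      ← Finset.mul_prod_erase _ (fun i => F i (x i)) (Finset.mem_univ i0)]
    have e1 : ∏ i ∈ Finset.univ.erase i0, F i (x i) =
        (∏ i ∈ Finset.univ.erase i0, φ (x i)) ^ 2 := by
      rw [← Finset.prod_pow]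
      refine Finset.prod_congr rfl fun i hi => ?_
      simp [F, Finset.ne_of_mem_erase hi]
    rw [e1]
    have e2 : F i0 = H := by simp [F]
    rw [e2]
    simp only [hH, hH1, hH2, hH3]
    linear_combination (2 : ℝ) ^ (-(n : ℝ) * s) * (∏ i ∈ Finset.univ.erase i0, φ (x i)) ^ 2 *
      (17 / 12) * φ (x i0) ^ 2 * Real.cos (17 / 12 * 2 ^ n * x i0) * h2n
  have hprod : ∏ i, (eLpNorm (F i) p volume).toReal = (eLpNorm H p volume).toReal *
      (eLpNorm (fun x : ℝ => φ x) (2 * p) volume).toReal ^ (2 * (d - 1)) := by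
    rw [← Finset.mul_prod_erase _ _ (Finset.mem_univ i0)]
    have e0 : F i0 = H := by simp [F]
    rw [e0]
    congr 1
    · rw [Finset.prod_congr rfl (g := fun _ =>
        (eLpNorm (fun x : ℝ => φ x) (2 * p) volume).toReal ^ 2)]
      · simp [pow_mul]
      · intro i hi
        simp only [F, Finset.ne_of_mem_erase hi, if_false]
        exact toReal_eLpNorm_sq _ p
  rw [hfun, eLpNorm_const_smul, ENNReal.toReal_mul, toReal_eLpNorm_prod F hFc p hp0 hp', hprod]
  have hen : (‖(2 : ℝ) ^ (-(n : ℝ) * s)‖ₑ).toReal = (2 : ℝ) ^ (-(n : ℝ) * s) := by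
    rw [toReal_enorm, Real.norm_of_nonneg (by positivity)]
  rw [hen, ← mul_assoc, hs, one_mul, ← sub_mul]
  refine mul_le_mul_of_nonneg_right ?_ (by positivity)
  have mφ : MemLp (fun x => φ x) p volume := φ.memLp p volume
  obtain ⟨C, hC⟩ : ∃ C, ∀ x, ‖φ x‖ ≤ C := ⟨_, fun x => SchwartzMap.norm_le_seminorm ℝ φ x⟩
  have mφ' : MemLp (deriv (fun y => φ y)) p volume :=
    (SchwartzMap.derivCLM ℝ ℝ φ).memLp p volume
  have mH1 : MemLp H1 p volume := by
    refine mφ.of_le_mul (c := C) hH1c.aestronglyMeasurable (ae_of_all _ fun x => ?_)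
    rw [hH1, norm_mul, pow_two, norm_mul]
    have := Real.abs_cos_le_one (17 / 12 * 2 ^ n * x)
    calc _ ≤ ‖φ x‖ * ‖φ x‖ * 1 := by gcongr; exact this
      _ ≤ _ := by rw [mul_one]; gcongr; exact hC x
  have mH2 : MemLp H2 p volume := by
    refine mφ'.of_le_mul (c := C) hH2c.aestronglyMeasurable (ae_of_all _ fun x => ?_)
    rw [hH2, norm_mul]
    gcongr
    exact hC x
  have hle3 : ∀ x, ‖H3 x‖ ≤ ‖H2 x‖ := by
    intro x
    rw [hH3, norm_mul]
    exact mul_le_of_le_one_right (norm_nonneg _) (Real.abs_sin_le_one _)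
  have mH3 : MemLp H3 p volume := mH2.mono hH3c.aestronglyMeasurable (ae_of_all _ hle3)
  have mH : MemLp H p volume := (mH1.const_mul _).add (mH3.const_mul _)
  have hsub : (17 / 12 : ℝ) • H1 = H - (2 : ℝ) ^ (-(n : ℝ)) • H3 := by
    ext x
    simp [hH]
  have htri : eLpNorm ((17 / 12 : ℝ) • H1) p volume ≤
      eLpNorm H p volume + eLpNorm ((2 : ℝ) ^ (-(n : ℝ)) • H3) p volume := by
    rw [hsub]
    exact eLpNorm_sub_le hHc.aestronglyMeasurable
      (hH3c.const_smul _).aestronglyMeasurable hp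
  have m3s : MemLp ((2 : ℝ) ^ (-(n : ℝ)) • H3) p volume := mH3.const_smul _
  have htri' := ENNReal.toReal_mono (ENNReal.add_ne_top.2 ⟨mH.eLpNorm_ne_top, m3s.eLpNorm_ne_top⟩)
    htri
  rw [ENNReal.toReal_add mH.eLpNorm_ne_top m3s.eLpNorm_ne_top, eLpNorm_const_smul,
    eLpNorm_const_smul, ENNReal.toReal_mul, ENNReal.toReal_mul, toReal_enorm, toReal_enorm,
    Real.norm_of_nonneg (by positivity), Real.norm_of_nonneg (by positivity)] at htri'
  have h32 : (eLpNorm H3 p volume).toReal ≤ (eLpNorm H2 p volume).toReal :=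
    ENNReal.toReal_mono mH2.eLpNorm_ne_top (eLpNorm_mono hle3)
  have h32' := mul_le_mul_of_nonneg_left h32 (show (0 : ℝ) ≤ (2 : ℝ) ^ (-(n : ℝ)) by positivity)
  linarith
end
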